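/- Fix integers m ≥ 1 and k ≥ 1. The homogeneous polynomials (x_1 + a_2 x_2 + ⋯ + a_m x_m)^k, as (a_2, …, a_m) ranges over ℝ^{m-1}, span the full space of real homogeneous polynomials of degree k in the m variables x_1, …, x_m. In particular, there exist d = binom(m-1+k, k) parameter tuples for which the corresponding k-th powers of linear forms are a basis of this space. -/

import Mathlib

open MvPolynomial

/-!
The span is computed by duality. Let `f` be a linear functional vanishing on every `L_a ^ k`,
where `L_a = ∑ i, a i * x_i` and the first coordinate of `a` is `1`. After rescaling, `f` vanishes
on `L_a ^ k` whenever the first coordinate of `a` is nonzero. By the multinomial theorem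
(`linearForm_pow_eq`), `a ↦ f (L_a ^ k)` is a polynomial in `a` whose coefficient at `x ^ n` is
`multinomial n * f (x ^ n)`. This polynomial vanishes on a box with infinite sides, hence is zero,
and since the multinomial coefficients are positive `f` kills all monomials of degree `k`
(`monomial_mem_span`). So no functional separates such a monomial from the span.

The basis is extracted from this spanning set; its size is the dimension of the space of forms,
which is the number of monomials of degree `k` (`finrank_homogeneousSubmodule`).
-/

theorem linearForm_pow_eq {m : ℕ} (k : ℕ) (a : Fin m → ℝ) :
    (∑ i : Fin m, C (a i) * X i : MvPolynomial (Fin m) ℝ) ^ k =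
      ∑ n ∈ Finset.univ.piAntidiag k,
        (Nat.multinomial Finset.univ n * ∏ i, a i ^ n i : ℝ) •
          monomial (Finsupp.equivFunOnFinite.symm n) (1 : ℝ) := by
  rw [Finset.sum_pow_eq_sum_piAntidiag]
  refine Finset.sum_congr rfl fun n _ => ?_
  rw [monomial_eq, Finsupp.prod_fintype _ _ (by simp), smul_eq_C_mul]
  simp [mul_pow, Finset.prod_mul_distrib, mul_assoc]

/-- Holds by duality: no linear functional vanishing on the powers of normalised linear forms can
be nonzero on a monomial of degree `k`. -/
theorem monomial_mem_span {m : ℕ} (k : ℕ) (i₀ : Fin m) (s : Fin m →₀ ℕ) (hs : s.degree = k) :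
    monomial s (1 : ℝ) ∈ Submodule.span ℝ {P : MvPolynomial (Fin m) ℝ |
        ∃ a : Fin m → ℝ, a i₀ = 1 ∧ P = (∑ i : Fin m, C (a i) * X i) ^ k} := by
  by_contra hmem
  obtain ⟨f, hfs, hf⟩ := Submodule.exists_le_ker_of_notMem hmem
  -- `Q` is the polynomial `a ↦ f (L_a ^ k)`.
  let Q : MvPolynomial (Fin m) ℝ := ∑ n ∈ Finset.univ.piAntidiag k,
    monomial (Finsupp.equivFunOnFinite.symm n)
      ((Nat.multinomial Finset.univ n : ℝ) *
        f (monomial (Finsupp.equivFunOnFinite.symm n) (1 : ℝ)))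
  have hQeval (a : Fin m → ℝ) : eval a Q = f ((∑ i : Fin m, C (a i) * X i) ^ k) := by
    rw [linearForm_pow_eq, map_sum, map_sum]
    refine Finset.sum_congr rfl fun n _ => ?_
    rw [eval_monomial, Finsupp.prod_fintype _ _ (by simp), map_smul, smul_eq_mul]
    simp only [Finsupp.equivFunOnFinite_symm_apply_apply]
    ring
  have hQ : Q = 0 := by
    refine funext_set (fun i => if i = i₀ then {0}ᶜ else Set.univ) (fun i => ?_) fun a ha => ?_
    · split_ifs
      · exact (Set.finite_singleton 0).infinite_compl
      · exact Set.infinite_univ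
    · have ha0 : a i₀ ≠ 0 := by simpa using ha i₀ trivial
      have hscale : (∑ i : Fin m, C (a i) * X i : MvPolynomial (Fin m) ℝ) ^ k =
          (a i₀ ^ k) • (∑ i : Fin m, C (a i / a i₀) * X i) ^ k := by
        rw [← smul_pow, Finset.smul_sum]
        congr 1
        refine Finset.sum_congr rfl fun i _ => ?_
        rw [smul_eq_C_mul, ← mul_assoc, ← C_mul, mul_div_cancel₀ _ ha0]
      have hker := hf (Submodule.subset_span ⟨fun i => a i / a i₀, div_self ha0, rfl⟩)
      rw [hQeval, hscale, map_smul, LinearMap.mem_ker.mp hker]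
      simp
  have hcoeff : coeff s Q = Nat.multinomial Finset.univ s * f (monomial s 1) := by
    rw [coeff_sum, Finset.sum_eq_single (s : Fin m → ℕ)]
    · simp
    · intro n _ hn
      rw [coeff_monomial, if_neg]
      rintro rfl
      exact hn rfl
    · intro h
      refine absurd ?_ h
      simpa [Finset.mem_piAntidiag, ← Finsupp.degree_eq_sum] using hs
  rw [hQ, coeff_zero] at hcoeff
  have hpos : (Nat.multinomial Finset.univ s : ℝ) ≠ 0 :=
    Nat.cast_ne_zero.mpr (Nat.multinomial_pos _ _).ne'
  exact (mul_ne_zero hpos hfs) hcoeff.symm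

theorem homogeneousSubmodule_eq_span_monomial (m k : ℕ) :
    homogeneousSubmodule (Fin m) ℝ k = Submodule.span ℝ
      (Set.range fun n : (Finset.univ : Finset (Fin m)).finsuppAntidiag k =>
        monomial (n : Fin m →₀ ℕ) (1 : ℝ)) := by
  apply le_antisymm
  · intro p hp
    rw [p.as_sum]
    refine Submodule.sum_mem _ fun n hn => ?_
    have hdeg := hp.degree_eq_sum_deg_support hn
    rw [← mul_one (coeff n p), ← smul_eq_mul, ← smul_monomial]
    refine Submodule.smul_mem _ _ (Submodule.subset_span ⟨⟨n, ?_⟩, rfl⟩)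
    rw [Finset.mem_finsuppAntidiag]
    exact ⟨by rw [hdeg, ← Finsupp.degree_apply, Finsupp.degree_eq_sum], Finset.subset_univ _⟩
  · rw [Submodule.span_le]
    rintro _ ⟨n, rfl⟩
    refine isHomogeneous_monomial _ ?_
    rw [Finsupp.degree_eq_sum]
    exact (Finset.mem_finsuppAntidiag.mp n.2).1

theorem finrank_homogeneousSubmodule (m k : ℕ) (hm : 1 ≤ m) :
    Module.finrank ℝ (homogeneousSubmodule (Fin m) ℝ k) = (m - 1 + k).choose k := by
  have hli : LinearIndependent ℝ
      (fun n : (Finset.univ : Finset (Fin m)).finsuppAntidiag k =>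
        monomial (n : Fin m →₀ ℕ) (1 : ℝ)) := by
    have h := (basisMonomials (Fin m) ℝ).linearIndependent
    rw [coe_basisMonomials] at h
    exact h.comp _ Subtype.val_injective
  rw [homogeneousSubmodule_eq_span_monomial, finrank_span_eq_card hli, Fintype.card_coe,
    Finset.card_finsuppAntidiag_nat_eq_choose, Finset.card_univ, Fintype.card_fin]
  congr 1
  omega

theorem powers_of_linear_forms_span (m k : ℕ) (hm : 1 ≤ m) (hk : 1 ≤ k) :
    (Submodule.span ℝ {P : MvPolynomial (Fin m) ℝ |
        ∃ a : Fin m → ℝ, a ⟨0, hm⟩ = 1 ∧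
          P = (∑ i : Fin m, MvPolynomial.C (a i) * MvPolynomial.X i) ^ k}
      = MvPolynomial.homogeneousSubmodule (Fin m) ℝ k) ∧
    ∃ t : Fin ((m - 1 + k).choose k) → (Fin m → ℝ),
      (∀ j, t j ⟨0, hm⟩ = 1) ∧
      LinearIndependent ℝ (fun j : Fin ((m - 1 + k).choose k) =>
        (∑ i : Fin m, MvPolynomial.C (t j i) * MvPolynomial.X i) ^ k) ∧
      Submodule.span ℝ (Set.range fun j : Fin ((m - 1 + k).choose k) =>
        (∑ i : Fin m, MvPolynomial.C (t j i) * MvPolynomial.X i) ^ k)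
      = MvPolynomial.homogeneousSubmodule (Fin m) ℝ k := by
  have hspan : Submodule.span ℝ {P : MvPolynomial (Fin m) ℝ |
        ∃ a : Fin m → ℝ, a ⟨0, hm⟩ = 1 ∧ P = (∑ i : Fin m, C (a i) * X i) ^ k}
      = homogeneousSubmodule (Fin m) ℝ k := by
    apply le_antisymm
    · rw [Submodule.span_le]
      rintro _ ⟨a, -, rfl⟩
      have h1 : (∑ i : Fin m, C (a i) * X i : MvPolynomial (Fin m) ℝ).IsHomogeneous 1 :=
        IsHomogeneous.sum _ _ _ fun i _ => isHomogeneous_C_mul_X _ _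
      simpa using h1.pow k
    · rw [homogeneousSubmodule_eq_span_monomial, Submodule.span_le]
      rintro _ ⟨n, rfl⟩
      refine monomial_mem_span k _ _ ?_
      rw [Finsupp.degree_eq_sum]
      exact (Finset.mem_finsuppAntidiag.mp n.2).1
  refine ⟨hspan, ?_⟩
  obtain ⟨b, hbS, hbspan, hbli⟩ := exists_linearIndependent ℝ {P : MvPolynomial (Fin m) ℝ |
        ∃ a : Fin m → ℝ, a ⟨0, hm⟩ = 1 ∧ P = (∑ i : Fin m, C (a i) * X i) ^ k}
  rw [hspan] at hbspan
  have hfin : Module.Finite ℝ (Submodule.span ℝ (Set.range ((↑) : b → MvPolynomial (Fin m) ℝ))) := by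
    rw [Subtype.range_coe, hbspan]
    exact Module.Finite.iff_fg.mpr (homogeneousSubmodule_fg (Fin m) ℝ k)
  have hbfin : Finite b := (linearIndependent_span hbli).finite
  have := Fintype.ofFinite b
  have hcard : Fintype.card b = (m - 1 + k).choose k := by
    rw [← finrank_span_eq_card hbli, Subtype.range_coe, hbspan, finrank_homogeneousSubmodule m k hm]
  let e : Fin ((m - 1 + k).choose k) ≃ b := (Fintype.equivFinOfCardEq hcard).symm
  choose t ht1 ht using fun j => hbS (e j).2
  have hfun : (fun j => (∑ i : Fin m, C (t j i) * X i : MvPolynomial (Fin m) ℝ) ^ k) =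
      Subtype.val ∘ e := funext fun j => (ht j).symm
  refine ⟨t, ht1, ?_, ?_⟩
  · rw [hfun]
    exact hbli.comp _ e.injective
  · rw [hfun, e.surjective.range_comp, Subtype.range_coe, hbspan]
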